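/- Let S(λ, c̄, p̄) be an iterated function scheme of similarities f_j(x) = λx + c_j (j = 1,…,k, 0 < λ < 1) with probability vector p̄ (p_j > 0, ∑p_j = 1), and let μ be a Borel probability measure on ℝ with μ = ∑_j p_j (f_j)_*μ. Suppose there is a compact interval K with f_j(K) ⊆ K for all j, a compact interval J whose interior contains the set {x − y : x, y ∈ K}, a constant θ > 0, an exponent α with 0 < α < 1, and a function ψ : ℝ → ℝ vanishing outside J with θ ≤ ψ(x) ≤ θ^{-1} for all x ∈ J, such that for every x ∈ J one has λ^{-α} ∑_{i,j} p_i p_j ψ((x − c_i + c_j)/λ) < ψ(x). Then for every α' with 0 < α' < α the energy ∬ |x − y|^{-α'} dμ(x) dμ(y) is finite, and every Borel set X ⊆ ℝ with μ(X) = 1 satisfies dim_H(X) ≥ α. -/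

import Mathlib

open MeasureTheory
open scoped ENNReal

/-! If `X` and `Y` are independent with law `μ`, then `X - Y` has a law `ν` which is itself
self-similar: it is stationary for the maps `z ↦ l z + (c i - c j)` with weights `p i p j`, and it
lives on `K - K`. The symmetric diffusion operator is the ordinary diffusion operator of this
difference scheme, so `D^{(2)} ψ ≤ ψ` propagates, by induction on the scale, the bound
`ν (B(x, lⁿ d)) ≤ θ⁻¹ l^{nα} ψ(x)`; the cutoff to `J` is harmless because `ν (B(x, d)) = 0`
off `J`. Taking `x = 0` gives `I(μ, s) = ∫ ‖z‖^{-s} dν < ∞` for `s < α`, and a set of positive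
measure for a measure of finite `s`-energy has dimension at least `s`. -/

open Metric Set
open scoped NNReal Pointwise

section Stationary

variable {ι κ X Y : Type*} [Fintype ι] [Fintype κ] [MeasurableSpace X] [MeasurableSpace Y]

/-- `μ` is a stationary measure of the iterated function scheme of the maps `f i` with weights
`p i`. The weights are `ℝ≥0∞`-valued and need not sum to one; the `f i` should be measurable, since
`Measure.map` is zero otherwise. -/
def IsStationaryMeasure (f : ι → X → X) (p : ι → ℝ≥0∞) (μ : Measure X) : Prop :=
  μ = ∑ i, p i • μ.map (f i)

variable {f : ι → X → X} {g : κ → Y → Y} {p : ι → ℝ≥0∞} {q : κ → ℝ≥0∞} {μ : Measure X}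
  {ν : Measure Y}

theorem isStationaryMeasure_iff (hf : ∀ i, Measurable (f i)) :
    IsStationaryMeasure f p μ ↔
      ∀ s, MeasurableSet s → μ s = ∑ i, p i * μ (f i ⁻¹' s) := by
  rw [IsStationaryMeasure, Measure.ext_iff]
  refine forall₂_congr fun s hs => ?_
  simp only [Measure.finsetSum_apply, Measure.smul_apply, smul_eq_mul,
    Measure.map_apply (hf _) hs]

namespace IsStationaryMeasure

theorem lintegral_eq (hμ : IsStationaryMeasure f p μ) (hf : ∀ i, Measurable (f i))
    {φ : X → ℝ≥0∞} (hφ : Measurable φ) :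
    ∫⁻ x, φ x ∂μ = ∑ i, p i * ∫⁻ x, φ (f i x) ∂μ := by
  conv_lhs => rw [hμ]
  simp only [lintegral_finsetSum_measure, lintegral_smul_measure, smul_eq_mul,
    lintegral_map hφ (hf _)]

theorem sum_weights_eq_one [IsProbabilityMeasure μ] (hμ : IsStationaryMeasure f p μ)
    (hf : ∀ i, Measurable (f i)) : ∑ i, p i = 1 := by
  simpa using ((isStationaryMeasure_iff hf).1 hμ univ .univ).symm

theorem map {h : ι → Y → Y} {π : X → Y} (hμ : IsStationaryMeasure f p μ)
    (hf : ∀ i, Measurable (f i)) (hh : ∀ i, Measurable (h i)) (hπ : Measurable π)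
    (hsemiconj : ∀ i, Function.Semiconj π (f i) (h i)) :
    IsStationaryMeasure h p (μ.map π) := by
  refine (isStationaryMeasure_iff hh).2 fun s hs => ?_
  simp only [Measure.map_apply hπ hs, Measure.map_apply hπ (hh _ hs),
    (isStationaryMeasure_iff hf).1 hμ _ (hπ hs), ← preimage_comp, (hsemiconj _).comp_eq]

theorem prod [SigmaFinite μ] [SigmaFinite ν] (hμ : IsStationaryMeasure f p μ)
    (hν : IsStationaryMeasure g q ν) (hf : ∀ i, Measurable (f i)) (hg : ∀ j, Measurable (g j)) :
    IsStationaryMeasure (fun ij : ι × κ => Prod.map (f ij.1) (g ij.2))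
      (fun ij => p ij.1 * q ij.2) (μ.prod ν) := by
  refine Measure.prod_eq fun s t hs ht => ?_
  have hfg : ∀ i j, Measurable (Prod.map (f i) (g j)) := fun i j => (hf i).prodMap (hg j)
  simp only [Measure.finsetSum_apply, Measure.smul_apply, smul_eq_mul,
    Measure.map_apply (hfg _ _) (hs.prod ht), preimage_prod_map_prod, Measure.prod_prod,
    (isStationaryMeasure_iff hf).1 hμ s hs, (isStationaryMeasure_iff hg).1 hν t ht,
    Finset.sum_mul_sum, Fintype.sum_prod_type]
  exact Finset.sum_congr rfl fun i _ => Finset.sum_congr rfl fun j _ => mul_mul_mul_comm ..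

end IsStationaryMeasure

end Stationary

section Contraction

variable {X : Type*} [PseudoMetricSpace X] {K : Set X} {k : ℝ≥0}

theorem infDist_le_mul_infDist_of_lipschitzWith {f : X → X} (hf : LipschitzWith k f)
    (hfK : MapsTo f K K) (x : X) : infDist (f x) K ≤ k * infDist x K := by
  rcases K.eq_empty_or_nonempty with rfl | hK
  · simp
  have := hK.to_subtype
  rw [infDist_eq_iInf (x := x), Real.mul_iInf_of_nonneg k.coe_nonneg]
  exact le_ciInf fun y => (infDist_le_dist_of_mem (hfK y.2)).trans (hf.dist_le_mul x y)

variable [MeasurableSpace X]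

-- Stationarity preserves the mean of any gauge of the distance to `K`, while each map contracts
-- that distance; `arctan` is strictly increasing and bounded, so that the mean is finite.
theorem IsStationaryMeasure.ae_mem_of_mapsTo {ι : Type*} [Fintype ι] [BorelSpace X]
    {f : ι → X → X} {p : ι → ℝ≥0∞} {μ : Measure X} [IsProbabilityMeasure μ]
    (hμ : IsStationaryMeasure f p μ) (hf : ∀ i, LipschitzWith k (f i)) (hk : k < 1)
    (hK : IsClosed K) (hK₀ : K.Nonempty) (hfK : ∀ i, MapsTo (f i) K K) :
    ∀ᵐ x ∂μ, x ∈ K := by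
  set gauge : ℝ → ℝ≥0∞ := fun t => ENNReal.ofReal (Real.arctan t)
  have hmono : Monotone gauge :=
    ENNReal.ofReal_mono.comp Real.arctan_strictMono.monotone
  have hmeas : Measurable fun x => gauge (infDist x K) := by fun_prop
  have hfm : ∀ i, Measurable (f i) := fun i => (hf i).continuous.measurable
  have hle : ∫⁻ x, gauge (infDist x K) ∂μ ≤ ∫⁻ x, gauge (k * infDist x K) ∂μ := by
    calc ∫⁻ x, gauge (infDist x K) ∂μ
        = ∑ i, p i * ∫⁻ x, gauge (infDist (f i x) K) ∂μ := hμ.lintegral_eq hfm hmeas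
      _ ≤ ∑ i, p i * ∫⁻ x, gauge (k * infDist x K) ∂μ := by
        gcongr with i _ x
        exact hmono (infDist_le_mul_infDist_of_lipschitzWith (hf i) (hfK i) x)
      _ = ∫⁻ x, gauge (k * infDist x K) ∂μ := by
        rw [← Finset.sum_mul, hμ.sum_weights_eq_one hfm, one_mul]
  have hfin : ∫⁻ x, gauge (k * infDist x K) ∂μ ≠ ⊤ := by
    refine (IsFiniteMeasure.lintegral_lt_top_of_bounded_to_ennreal μ
      ⟨Real.toNNReal (Real.pi / 2), fun x => ?_⟩).ne
    exact ENNReal.ofReal_le_ofReal (Real.arctan_lt_pi_div_two _).le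
  have hcontract : ∀ x, k * infDist x K ≤ infDist x K := fun x =>
    mul_le_of_le_one_left infDist_nonneg (by exact_mod_cast hk.le)
  filter_upwards [ae_eq_of_ae_le_of_lintegral_le (.of_forall fun x => hmono (hcontract x))
    hfin hmeas.aemeasurable hle] with x hx
  by_contra hxK
  have hpos : 0 < infDist x K := (hK.notMem_iff_infDist_pos hK₀).1 hxK
  have hlt : (k : ℝ) * infDist x K < infDist x K :=
    mul_lt_of_lt_one_left hpos (by exact_mod_cast hk)
  refine ((ENNReal.ofReal_lt_ofReal_iff ?_).2 (Real.arctan_strictMono hlt)).ne hx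
  exact Real.arctan_pos.2 hpos

theorem exists_measure_closedBall_eq_zero {ν : Measure X} {J : Set X} (hK : IsCompact K)
    (hKJ : K ⊆ interior J) (hνK : ∀ᵐ x ∂ν, x ∈ K) : ∃ d > 0, ∀ x ∉ J, ν (closedBall x d) = 0 := by
  obtain ⟨d, hd, hdJ⟩ := hK.exists_cthickening_subset_open isOpen_interior hKJ
  refine ⟨d, hd, fun x hx => measure_mono_null (fun z hz (hzK : z ∈ K) => hx ?_) (ae_iff.1 hνK)⟩
  exact interior_subset (hdJ (closedBall_subset_cthickening hzK d (mem_closedBall_comm.1 hz)))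

end Contraction

section Riesz

variable {X : Type*} [MeasurableSpace X]

/-- The Riesz potential `∫ d(x, y)^{-s} dμ(y)` of `μ` at `x`. -/
noncomputable def rieszPotential [EDist X] (μ : Measure X) (s : ℝ) (x : X) : ℝ≥0∞ :=
  ∫⁻ y, edist x y ^ (-s) ∂μ

/-- The energy `I(μ, s) = ∬ d(x, y)^{-s} dμ(x) dμ(y)`; atoms of `μ` make it infinite when `s > 0`,
since `0 ^ (-s) = ⊤`. -/
noncomputable def rieszEnergy [EDist X] (μ : Measure X) (s : ℝ) : ℝ≥0∞ :=
  ∫⁻ x, rieszPotential μ s x ∂μ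

theorem rieszEnergy_real_eq (μ : Measure ℝ) (s : ℝ) :
    rieszEnergy μ s = ∫⁻ x, ∫⁻ y, ENNReal.ofReal |x - y| ^ (-s) ∂μ ∂μ := by
  simp only [rieszEnergy, rieszPotential, edist_dist, Real.dist_eq]

theorem measurable_rieszPotential [PseudoEMetricSpace X] [OpensMeasurableSpace X]
    [SecondCountableTopology X] (μ : Measure X) [SFinite μ] (s : ℝ) :
    Measurable (rieszPotential μ s) :=
  (measurable_edist.pow_const (-s)).lintegral_prod_right'

theorem antitone_rpow_neg {s : ℝ} (hs : 0 ≤ s) :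
    Antitone fun t : ℝ≥0∞ => t ^ (-s) := fun a b hab => by
  simp only [ENNReal.rpow_neg]
  gcongr

theorem measure_le_mul_ediam_rpow [PseudoEMetricSpace X] [OpensMeasurableSpace X]
    {μ : Measure X} {s : ℝ} (hs : 0 ≤ s) {M : ℝ≥0∞} (hM₀ : M ≠ 0) (hM : M ≠ ⊤) {x : X}
    (hxM : rieszPotential μ s x ≤ M) {t : Set X} (hxt : x ∈ t) :
    μ t ≤ M * ediam t ^ s := by
  have hsub : t ⊆ {y | ediam t ^ (-s) ≤ edist x y ^ (-s)} := fun y hy =>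
    antitone_rpow_neg hs (edist_le_ediam_of_mem hxt hy)
  have hmarkov : ediam t ^ (-s) * μ t ≤ M :=
    calc ediam t ^ (-s) * μ t ≤ ediam t ^ (-s) * μ {y | ediam t ^ (-s) ≤ edist x y ^ (-s)} := by
          gcongr
      _ ≤ rieszPotential μ s x :=
          mul_meas_ge_le_lintegral (measurable_edist_right.pow_const _) _
      _ ≤ M := hxM
  rw [ENNReal.rpow_neg, mul_comm, ← div_eq_mul_inv] at hmarkov
  exact (ENNReal.div_le_iff_le_mul (.inr hM) (.inr hM₀)).1 hmarkov

variable [EMetricSpace X] [BorelSpace X] [SecondCountableTopology X] {μ : Measure X} [SFinite μ]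

theorem exists_nat_measure_inter_rieszPotential_le_ne_zero {s : ℝ} (hI : rieszEnergy μ s ≠ ⊤)
    {A : Set X} (hA : μ A ≠ 0) :
    ∃ n : ℕ, μ (A ∩ {x | rieszPotential μ s x ≤ n}) ≠ 0 := by
  by_contra! hnull
  refine hA (measure_mono_null (t := (⋃ n : ℕ, A ∩ {x | rieszPotential μ s x ≤ n}) ∪
    {x | ¬ rieszPotential μ s x < ⊤}) (fun x hx => ?_) ?_)
  · by_cases hfin : rieszPotential μ s x < ⊤
    · obtain ⟨n, hn⟩ := ENNReal.exists_nat_gt hfin.ne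
      exact .inl (mem_iUnion.2 ⟨n, hx, hn.le⟩)
    · exact .inr hfin
  · exact measure_union_null (measure_iUnion_null hnull)
      (ae_iff.1 (ae_lt_top (measurable_rieszPotential μ s) hI))

theorem le_dimH_of_rieszEnergy_ne_top {s : ℝ≥0} (hI : rieszEnergy μ s ≠ ⊤) {A : Set X}
    (hA : μ A ≠ 0) : s ≤ dimH A := by
  obtain ⟨n, hn⟩ := exists_nat_measure_inter_rieszPotential_le_ne_zero hI hA
  set B := {x | rieszPotential μ s x ≤ n}
  have hB : MeasurableSet B := measurableSet_le (measurable_rieszPotential μ s) measurable_const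
  set M : ℝ≥0∞ := n + 1
  have hM₀ : M ≠ 0 := by simp [M]
  have hM : M ≠ ⊤ := by simp [M]
  have hle : M⁻¹ • μ.restrict B ≤ μH[s] := by
    refine Measure.le_hausdorffMeasure s _ 1 one_pos fun t _ => ?_
    rw [Measure.smul_apply, Measure.restrict_apply' hB, smul_eq_mul,
      ENNReal.inv_mul_le_iff hM₀ hM]
    rcases (t ∩ B).eq_empty_or_nonempty with hempty | ⟨x, hxt, hxB⟩
    · simp [hempty]
    · exact (measure_mono inter_subset_left).trans
        (measure_le_mul_ediam_rpow s.2 hM₀ hM (le_add_right hxB) hxt)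
  refine le_dimH_of_hausdorffMeasure_ne_zero fun hzero => hn ?_
  have hAB : M⁻¹ * μ (A ∩ B) ≤ 0 := by
    simpa [Measure.restrict_apply' hB, hzero] using hle A
  exact (mul_eq_zero.1 (nonpos_iff_eq_zero.1 hAB)).resolve_left (ENNReal.inv_ne_zero.2 hM)

theorem ofReal_le_dimH_of_rieszEnergy_ne_top {α : ℝ}
    (hI : ∀ s, 0 ≤ s → s < α → rieszEnergy μ s ≠ ⊤) {A : Set X} (hA : μ A ≠ 0) :
    ENNReal.ofReal α ≤ dimH A :=
  ENNReal.le_of_forall_nnreal_lt fun s hs =>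
    le_dimH_of_rieszEnergy_ne_top
      (hI s s.2 ((ENNReal.lt_ofReal_iff_toReal_lt ENNReal.coe_ne_top).1 hs)) hA

end Riesz

section NegativeMoments

variable {l d : ℝ≥0} {s : ℝ}

theorem rpow_neg_le_add_tsum (hl₀ : 0 < l) (hl₁ : l < 1) (hd : 0 < d) (hs : 0 ≤ s) (t : ℝ≥0) :
    (t : ℝ≥0∞) ^ (-s) ≤ (d : ℝ≥0∞) ^ (-s) +
      ∑' n : ℕ, ((l ^ (n + 1) * d : ℝ≥0) : ℝ≥0∞) ^ (-s) * (Iic (l ^ n * d)).indicator 1 t := by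
  have hanti : ∀ {a b : ℝ≥0}, a ≤ b → (b : ℝ≥0∞) ^ (-s) ≤ (a : ℝ≥0∞) ^ (-s) := fun h =>
    antitone_rpow_neg hs (ENNReal.coe_le_coe.2 h)
  rcases le_total d t with hdt | htd
  · exact le_add_right (hanti hdt)
  refine le_add_left ?_
  rcases eq_or_ne t 0 with rfl | ht
  · refine le_top.trans_eq (top_le_iff.1 ?_).symm
    rw [← ENNReal.tsum_const_eq_top_of_ne_zero (α := ℕ) (c := (d : ℝ≥0∞) ^ (-s))
      (by simp [ENNReal.rpow_eq_zero_iff, hd.ne', hs.not_gt])]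
    refine ENNReal.tsum_le_tsum fun n => ?_
    rw [indicator_of_mem (mem_Iic.2 zero_le), Pi.one_apply, mul_one]
    exact hanti (mul_le_of_le_one_left d.2 (pow_le_one₀ l.2 hl₁.le))
  · obtain ⟨n, hn_lt, hn_le⟩ := exists_nat_pow_near_of_lt_one (x := t / d)
      (div_pos (pos_iff_ne_zero.2 ht) hd) (div_le_one_of_le₀ htd d.2) hl₀ hl₁
    rw [lt_div_iff₀ hd] at hn_lt
    rw [div_le_iff₀ hd] at hn_le
    refine le_trans ?_ (ENNReal.le_tsum n)
    rw [indicator_of_mem (mem_Iic.2 hn_le), Pi.one_apply, mul_one]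
    exact hanti hn_lt.le

variable {Ω : Type*} [MeasurableSpace Ω] {ν : Measure Ω} {f : Ω → ℝ≥0}

theorem lintegral_rpow_neg_le_add_tsum (hf : Measurable f) (hl₀ : 0 < l) (hl₁ : l < 1)
    (hd : 0 < d) (hs : 0 ≤ s) :
    ∫⁻ ω, (f ω : ℝ≥0∞) ^ (-s) ∂ν ≤ (d : ℝ≥0∞) ^ (-s) * ν univ +
      ∑' n : ℕ, ((l ^ (n + 1) * d : ℝ≥0) : ℝ≥0∞) ^ (-s) * ν {ω | f ω ≤ l ^ n * d} := by
  have hlevel : ∀ n : ℕ, MeasurableSet {ω | f ω ≤ l ^ n * d} := fun n =>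
    measurableSet_le hf measurable_const
  have hind : ∀ n : ℕ, Measurable fun ω => (Iic (l ^ n * d)).indicator (1 : ℝ≥0 → ℝ≥0∞) (f ω) :=
    fun n => (measurable_one.indicator measurableSet_Iic).comp hf
  refine (lintegral_mono fun ω => rpow_neg_le_add_tsum hl₀ hl₁ hd hs (f ω)).trans_eq ?_
  rw [lintegral_add_left measurable_const, lintegral_const,
    lintegral_tsum fun n => ((hind n).const_mul _).aemeasurable]
  congr! with n
  rw [lintegral_const_mul _ (hind n), ← lintegral_indicator_one (hlevel n)]
  rfl

theorem coe_pow_succ_mul_rpow (l d : ℝ≥0) (r : ℝ) (n : ℕ) :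
    ((l ^ (n + 1) * d : ℝ≥0) : ℝ≥0∞) ^ r = ((l : ℝ≥0∞) ^ r) ^ n * ((l * d : ℝ≥0) : ℝ≥0∞) ^ r := by
  rw [pow_succ, mul_assoc, ENNReal.coe_mul, ENNReal.coe_pow,
    ENNReal.mul_rpow_of_ne_top (ENNReal.pow_ne_top ENNReal.coe_ne_top) ENNReal.coe_ne_top,
    ← ENNReal.rpow_natCast_mul, mul_comm (n : ℝ), ENNReal.rpow_mul_natCast]

theorem lintegral_rpow_neg_ne_top [IsFiniteMeasure ν] (hf : Measurable f) (hl₀ : 0 < l)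
    (hl₁ : l < 1) (hd : 0 < d) {C : ℝ≥0∞} (hC : C ≠ ⊤) {α : ℝ}
    (hν : ∀ n : ℕ, ν {ω | f ω ≤ l ^ n * d} ≤ C * ((l : ℝ≥0∞) ^ α) ^ n)
    (hs : 0 ≤ s) (hsα : s < α) : ∫⁻ ω, (f ω : ℝ≥0∞) ^ (-s) ∂ν ≠ ⊤ := by
  have hrpow : ∀ {t : ℝ≥0}, 0 < t → (t : ℝ≥0∞) ^ (-s) ≠ ⊤ := fun ht =>
    ENNReal.rpow_ne_top_of_ne_zero (ENNReal.coe_ne_zero.2 ht.ne') ENNReal.coe_ne_top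
  have hterm : ∀ n : ℕ, ((l ^ (n + 1) * d : ℝ≥0) : ℝ≥0∞) ^ (-s) * ν {ω | f ω ≤ l ^ n * d} ≤
      ((l : ℝ≥0∞) ^ (α - s)) ^ n * (((l * d : ℝ≥0) : ℝ≥0∞) ^ (-s) * C) := fun n => by
    refine (mul_le_mul_right (hν n) _).trans_eq ?_
    rw [coe_pow_succ_mul_rpow, sub_eq_neg_add,
      ENNReal.rpow_add _ _ (ENNReal.coe_ne_zero.2 hl₀.ne') ENNReal.coe_ne_top, mul_pow]
    ring
  have hgeom : ∑' n, ((l : ℝ≥0∞) ^ (α - s)) ^ n ≠ ⊤ := by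
    rw [ENNReal.tsum_geometric]
    exact ENNReal.inv_ne_top.2 (tsub_pos_of_lt
      (ENNReal.rpow_lt_one (ENNReal.coe_lt_one_iff.2 hl₁) (sub_pos.2 hsα))).ne'
  refine ne_top_of_le_ne_top (ENNReal.add_ne_top.2 ⟨?_, ?_⟩)
    (lintegral_rpow_neg_le_add_tsum hf hl₀ hl₁ hd hs)
  · exact ENNReal.mul_ne_top (hrpow hd) (measure_ne_top ν univ)
  · refine ne_top_of_le_ne_top ?_ (ENNReal.tsum_le_tsum hterm)
    rw [ENNReal.tsum_mul_right]
    exact ENNReal.mul_ne_top hgeom (ENNReal.mul_ne_top (hrpow (mul_pos hl₀ hd)) hC)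

end NegativeMoments

section Diffusion

variable {E κ : Type*} [NormedAddCommGroup E] [NormedSpace ℝ E] [Fintype κ] {l : ℝ} {b : κ → E}
  {q : κ → ℝ≥0∞}

/-- The diffusion operator `D_α ψ(x) = l^{-α} ∑ q_k ψ((x - b_k) / l)` of the scheme of similarities
`x ↦ l x + b_k` with weights `q_k`. The symmetric operator `D^{(2)}_α` of a scheme with translations
`c_i` and weights `p_i` is obtained for the translations `c_i - c_j` and the weights `p_i p_j`. -/
noncomputable def diffusion (l α : ℝ) (b : κ → E) (q : κ → ℝ≥0∞) (ψ : E → ℝ≥0∞) (x : E) : ℝ≥0∞ :=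
  ENNReal.ofReal l ^ (-α) * ∑ k, q k * ψ (l⁻¹ • (x - b k))

theorem diffusion_ofReal (hl₀ : 0 < l) (α : ℝ) (b : κ → E) {q : κ → ℝ} (hq : ∀ k, 0 ≤ q k)
    {ψ : E → ℝ} (hψ : ∀ x, 0 ≤ ψ x) (x : E) :
    diffusion l α b (fun k => ENNReal.ofReal (q k)) (fun x => ENNReal.ofReal (ψ x)) x =
      ENNReal.ofReal (l ^ (-α) * ∑ k, q k * ψ (l⁻¹ • (x - b k))) := by
  rw [ENNReal.ofReal_mul (by positivity), ← ENNReal.ofReal_rpow_of_pos hl₀,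
    ENNReal.ofReal_sum_of_nonneg fun k _ => mul_nonneg (hq k) (hψ _)]
  simp only [diffusion, ENNReal.ofReal_mul (hq _)]

theorem diffusion_sub_ofReal {ι : Type*} [Fintype ι] (hl₀ : 0 < l) (α : ℝ) (c : ι → E) {p : ι → ℝ}
    (hp : ∀ i, 0 ≤ p i) {ψ : E → ℝ} (hψ : ∀ x, 0 ≤ ψ x) (x : E) :
    diffusion l α (fun ij : ι × ι => c ij.1 - c ij.2)
        (fun ij => ENNReal.ofReal (p ij.1) * ENNReal.ofReal (p ij.2))
        (fun x => ENNReal.ofReal (ψ x)) x =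
      ENNReal.ofReal (l ^ (-α) * ∑ i, ∑ j, p i * p j * ψ (l⁻¹ • (x - c i + c j))) := by
  simp only [← ENNReal.ofReal_mul (hp _)]
  rw [diffusion_ofReal (q := fun ij : ι × ι => p ij.1 * p ij.2) hl₀ α _
    (fun ij => mul_nonneg (hp ij.1) (hp ij.2)) hψ]
  simp only [Fintype.sum_prod_type, ← sub_add]

theorem lipschitzWith_smul_add (l : ℝ) (b : E) : LipschitzWith ‖l‖₊ fun x : E => l • x + b :=
  .of_dist_le_mul fun x y => by
    rw [dist_add_right, coe_nnnorm, dist_smul₀]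

theorem preimage_smul_add_closedBall (hl₀ : 0 < l) (b x : E) (r : ℝ) :
    (fun z : E => l • z + b) ⁻¹' closedBall x (l * r) = closedBall (l⁻¹ • (x - b)) r := by
  ext z
  have hdist : l • z + b - x = l • (z - l⁻¹ • (x - b)) := by
    rw [smul_sub, smul_inv_smul₀ hl₀.ne']
    abel
  rw [mem_preimage, mem_closedBall_iff_norm, mem_closedBall_iff_norm, hdist, norm_smul,
    Real.norm_of_nonneg hl₀.le, mul_le_mul_iff_right₀ hl₀]

variable [MeasurableSpace E] [BorelSpace E] {ν : Measure E} {J : Set E} {ψ : E → ℝ≥0∞}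
  {d α : ℝ} {C : ℝ≥0∞}

theorem measurable_smul_add (l : ℝ) (b : E) : Measurable fun x : E => l • x + b :=
  (lipschitzWith_smul_add l b).continuous.measurable

theorem IsStationaryMeasure.measure_closedBall_mul
    (hν : IsStationaryMeasure (fun k z => l • z + b k) q ν) (hl₀ : 0 < l) (x : E) (r : ℝ) :
    ν (closedBall x (l * r)) = ∑ k, q k * ν (closedBall (l⁻¹ • (x - b k)) r) := by
  simp only [(isStationaryMeasure_iff fun k => measurable_smul_add l (b k)).1 hν _
    measurableSet_closedBall, preimage_smul_add_closedBall hl₀]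

variable [IsProbabilityMeasure ν]

theorem IsStationaryMeasure.measure_closedBall_le_of_diffusion_le
    (hν : IsStationaryMeasure (fun k z => l • z + b k) q ν) (hl₀ : 0 < l) (hl₁ : l < 1)
    (hd : 0 < d) (hνJ : ∀ x ∉ J, ν (closedBall x d) = 0)
    (hψ : ∀ x ∈ J, diffusion l α b q ψ x ≤ ψ x) (hCψ : ∀ x ∈ J, 1 ≤ C * ψ x) (n : ℕ) (x : E) :
    ν (closedBall x (l ^ n * d)) ≤ C * (ENNReal.ofReal l ^ α) ^ n * ψ x := by
  induction n generalizing x with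
  | zero =>
    by_cases hx : x ∈ J
    · simpa using prob_le_one.trans (hCψ x hx)
    · simp [hνJ x hx]
  | succ n ih =>
    by_cases hx : x ∈ J
    · set L := ENNReal.ofReal l
      have hL : L ^ α * L ^ (-α) = 1 := by
        rw [← ENNReal.rpow_add _ _ (ENNReal.ofReal_pos.2 hl₀).ne' ENNReal.ofReal_ne_top,
          add_neg_cancel, ENNReal.rpow_zero]
      calc ν (closedBall x (l ^ (n + 1) * d))
          = ∑ k, q k * ν (closedBall (l⁻¹ • (x - b k)) (l ^ n * d)) := by
            rw [pow_succ', mul_assoc, hν.measure_closedBall_mul hl₀]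
        _ ≤ ∑ k, q k * (C * (L ^ α) ^ n * ψ (l⁻¹ • (x - b k))) := by
            gcongr
            exact ih _
        _ = C * (L ^ α) ^ n * ∑ k, q k * ψ (l⁻¹ • (x - b k)) := by
            simp only [Finset.mul_sum, mul_left_comm]
        _ = C * (L ^ α) ^ (n + 1) * diffusion l α b q ψ x := by
            rw [diffusion, pow_succ, ← mul_assoc C, mul_assoc _ (L ^ α), ← mul_assoc (L ^ α), hL,
              one_mul]
        _ ≤ C * (L ^ α) ^ (n + 1) * ψ x := by
            gcongr
            exact hψ x hx
    · have hsub : closedBall x (l ^ (n + 1) * d) ⊆ closedBall x d :=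
        closedBall_subset_closedBall
          (mul_le_of_le_one_left hd.le (pow_le_one₀ hl₀.le hl₁.le))
      simp [measure_mono_null hsub (hνJ x hx)]

theorem IsStationaryMeasure.lintegral_enorm_rpow_neg_ne_top
    (hν : IsStationaryMeasure (fun k z => l • z + b k) q ν) (hl₀ : 0 < l) (hl₁ : l < 1)
    (hd : 0 < d) (hνJ : ∀ x ∉ J, ν (closedBall x d) = 0)
    (hψ : ∀ x ∈ J, diffusion l α b q ψ x ≤ ψ x) (hψ₀ : ψ 0 ≠ ⊤) (hC : C ≠ ⊤)
    (hCψ : ∀ x ∈ J, 1 ≤ C * ψ x) {s : ℝ} (hs : 0 ≤ s) (hsα : s < α) :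
    ∫⁻ z, ‖z‖ₑ ^ (-s) ∂ν ≠ ⊤ := by
  have hball := hν.measure_closedBall_le_of_diffusion_le hl₀ hl₁ hd hνJ hψ hCψ
  lift l to ℝ≥0 using hl₀.le
  lift d to ℝ≥0 using hd.le
  refine lintegral_rpow_neg_ne_top measurable_nnnorm (by exact_mod_cast hl₀)
    (by exact_mod_cast hl₁) (by exact_mod_cast hd) (ENNReal.mul_ne_top hC hψ₀) (fun n => ?_) hs hsα
  have hset : {z : E | ‖z‖₊ ≤ l ^ n * d} = closedBall 0 ((l : ℝ) ^ n * d) := by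
    ext z
    rw [mem_closedBall_zero_iff]
    exact_mod_cast Iff.rfl
  rw [hset, mul_right_comm]
  simpa only [ENNReal.ofReal_coe_nnreal] using hball n 0

end Diffusion

section DifferenceLaw

/-- The law of `X - Y` for independent `X` and `Y` distributed according to `μ`. -/
noncomputable def differenceLaw {E : Type*} [Sub E] [MeasurableSpace E] (μ : Measure E) :
    Measure E :=
  (μ.prod μ).map fun z => z.1 - z.2

variable {E ι : Type*} [NormedAddCommGroup E] [MeasurableSpace E] [BorelSpace E]
  [SecondCountableTopology E] [Fintype ι] {μ : Measure E}

theorem rieszEnergy_eq_lintegral_differenceLaw [SFinite μ] (s : ℝ) :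
    rieszEnergy μ s = ∫⁻ z, ‖z‖ₑ ^ (-s) ∂(differenceLaw μ) := by
  have hmeas : Measurable fun z : E => ‖z‖ₑ ^ (-s) := by fun_prop
  rw [differenceLaw, lintegral_map hmeas (by fun_prop), lintegral_prod _ (by fun_prop)]
  simp only [rieszEnergy, rieszPotential, edist_eq_enorm_sub]

theorem ae_differenceLaw_mem_sub {K : Set E} (hK : MeasurableSet (K - K))
    (hμK : ∀ᵐ x ∂μ, x ∈ K) : ∀ᵐ z ∂differenceLaw μ, z ∈ K - K := by
  refine (ae_map_iff (by fun_prop) hK).2 ?_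
  filter_upwards [Measure.quasiMeasurePreserving_fst.ae hμK,
    Measure.quasiMeasurePreserving_snd.ae hμK] with z hz₁ hz₂
  exact sub_mem_sub hz₁ hz₂

theorem IsStationaryMeasure.differenceLaw [NormedSpace ℝ E] [SigmaFinite μ] {l : ℝ} {c : ι → E}
    {p : ι → ℝ≥0∞} (hμ : IsStationaryMeasure (fun i x => l • x + c i) p μ) :
    IsStationaryMeasure (fun (ij : ι × ι) z => l • z + (c ij.1 - c ij.2))
      (fun ij => p ij.1 * p ij.2) (differenceLaw μ) := by
  have hmeas : ∀ i, Measurable fun x => l • x + c i := fun i => measurable_smul_add l (c i)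
  refine (hμ.prod hμ hmeas hmeas).map (fun ij => (hmeas ij.1).prodMap (hmeas ij.2))
    (fun ij => measurable_smul_add l _) measurable_sub fun ij z => ?_
  simp only [Prod.map_fst, Prod.map_snd, smul_sub]
  abel

end DifferenceLaw

theorem certificate_D2_general {ι E : Type*} [Fintype ι] [NormedAddCommGroup E] [NormedSpace ℝ E]
    [MeasurableSpace E] [BorelSpace E] [SecondCountableTopology E]
    {l : ℝ} (hl₀ : 0 < l) (hl₁ : l < 1) {c : ι → E} {p : ι → ℝ} (hp : ∀ i, 0 ≤ p i)
    {μ : Measure E} [IsProbabilityMeasure μ]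
    (hμ : IsStationaryMeasure (fun i x => l • x + c i) (fun i => ENNReal.ofReal (p i)) μ)
    {K : Set E} (hK : IsCompact K) (hK₀ : K.Nonempty)
    (hKc : ∀ i, MapsTo (fun x => l • x + c i) K K) {J : Set E} (hJ : K - K ⊆ interior J)
    {θ : ℝ} (hθ : 0 < θ) {α : ℝ} {ψ : E → ℝ} (hψ₀ : ∀ x ∉ J, 0 ≤ ψ x) (hψ : ∀ x ∈ J, θ ≤ ψ x)
    (hcontr : ∀ x ∈ J, l ^ (-α) * ∑ i, ∑ j, p i * p j * ψ (l⁻¹ • (x - c i + c j)) ≤ ψ x) :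
    (∀ s, 0 ≤ s → s < α → rieszEnergy μ s ≠ ⊤) ∧
      ∀ A : Set E, μ A ≠ 0 → ENNReal.ofReal α ≤ dimH A := by
  have hν := hμ.differenceLaw
  have : IsProbabilityMeasure (differenceLaw μ) :=
    Measure.isProbabilityMeasure_map measurable_sub.aemeasurable
  have hl : ‖l‖₊ < 1 := by rwa [← NNReal.coe_lt_one, coe_nnnorm, Real.norm_of_nonneg hl₀.le]
  have hμK : ∀ᵐ x ∂μ, x ∈ K :=
    hμ.ae_mem_of_mapsTo (fun i => lipschitzWith_smul_add l (c i)) hl hK.isClosed hK₀ hKc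
  have hKK : IsCompact (K - K) := sub_eq_add_neg K K ▸ hK.add hK.neg
  obtain ⟨d, hd, hνJ⟩ :=
    exists_measure_closedBall_eq_zero hKK hJ (ae_differenceLaw_mem_sub hKK.measurableSet hμK)
  have hψ_nonneg : ∀ x, 0 ≤ ψ x := fun x =>
    (em (x ∈ J)).elim (fun hx => hθ.le.trans (hψ x hx)) (hψ₀ x)
  have hθψ : ∀ x ∈ J, 1 ≤ ENNReal.ofReal θ⁻¹ * ENNReal.ofReal (ψ x) := fun x hx => by
    rw [← ENNReal.ofReal_mul (by positivity), ENNReal.one_le_ofReal, ← div_eq_inv_mul,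
      one_le_div hθ]
    exact hψ x hx
  have hI : ∀ s, 0 ≤ s → s < α → rieszEnergy μ s ≠ ⊤ := fun s hs hsα => by
    rw [rieszEnergy_eq_lintegral_differenceLaw]
    exact hν.lintegral_enorm_rpow_neg_ne_top hl₀ hl₁ hd hνJ
      (fun x hx => (diffusion_sub_ofReal hl₀ α c hp hψ_nonneg x).trans_le
        (ENNReal.ofReal_le_ofReal (hcontr x hx)))
      ENNReal.ofReal_ne_top ENNReal.ofReal_ne_top hθψ hs hsα
  exact ⟨hI, fun A => ofReal_le_dimH_of_rieszEnergy_ne_top hI⟩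

/-- Theorem (certificate for the correlation dimension): if a positive test function `ψ`
supported on an admissible interval `J` is strictly decreased by the symmetric diffusion
operator `D^{(2)}_{α,S}`, then the energy `I(μ, α')` is finite for all `0 < α' < α`, and
every Borel set of full `μ`-measure has Hausdorff dimension at least `α`. -/
theorem certificate_D2 (k : ℕ) (l : ℝ) (hl0 : 0 < l) (hl1 : l < 1)
    (c : Fin k → ℝ) (p : Fin k → ℝ) (hp : ∀ j, 0 < p j) (hpsum : ∑ j, p j = 1)
    (μ : Measure ℝ) [IsProbabilityMeasure μ]
    (hμ : μ = ∑ j, ENNReal.ofReal (p j) • Measure.map (fun x : ℝ => l * x + c j) μ)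
    -- a compact interval `K = [a,b]` invariant under all the maps
    (a b : ℝ) (hab : a ≤ b)
    (hK : ∀ j, ∀ x ∈ Set.Icc a b, l * x + c j ∈ Set.Icc a b)
    -- an admissible compact interval `J = [u,v]` whose interior contains `K - K`
    (u v : ℝ) (huv : u ≤ v)
    (hJ : {z : ℝ | ∃ x ∈ Set.Icc a b, ∃ y ∈ Set.Icc a b, z = x - y}
            ⊆ interior (Set.Icc u v))
    (θ : ℝ) (hθ : 0 < θ)
    (α : ℝ) (hα0 : 0 < α) (hα1 : α < 1)
    (ψ : ℝ → ℝ)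
    (hψ0 : ∀ x ∉ Set.Icc u v, ψ x = 0)
    (hψb : ∀ x ∈ Set.Icc u v, θ ≤ ψ x ∧ ψ x ≤ θ⁻¹)
    (hcontr : ∀ x ∈ Set.Icc u v,
      l ^ (-α) * ∑ i, ∑ j, p i * p j * ψ ((x - c i + c j) / l) < ψ x) :
    (∀ α' : ℝ, 0 < α' → α' < α →
        (∫⁻ x, ∫⁻ y, (ENNReal.ofReal |x - y|) ^ (-α') ∂μ ∂μ) ≠ ⊤) ∧
    ∀ X : Set ℝ, MeasurableSet X → μ X = 1 → ENNReal.ofReal α ≤ dimH X := by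
  obtain ⟨hI, hdim⟩ := certificate_D2_general hl0 hl1 (fun j => (hp j).le) hμ isCompact_Icc
    (nonempty_Icc.2 hab) hK (sub_subset_iff.2 fun x hx y hy => hJ ⟨x, hx, y, hy, rfl⟩) hθ
    (fun x hx => (hψ0 x hx).ge) (fun x hx => (hψb x hx).1)
    (fun x hx => by simpa only [smul_eq_mul, ← div_eq_inv_mul] using (hcontr x hx).le)
  exact ⟨fun s hs hsα => rieszEnergy_real_eq μ s ▸ hI s hs.le hsα,
    fun X _ hX => hdim X (by simp [hX])⟩
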